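/- Let n ≥ 1 and B ≥ 0 be integers, let γ_0, γ_1, …, γ_B be a partition of {1,…,n} with |γ_b| = k_b ≥ 1 for each b, and let 0 < σ²_min < σ²_max. For c ∈ ℝⁿ such that each maximum likelihood estimate σ̂_b² = S_{γ_b}(c)/k_b lies in [σ²_min, σ²_max] and is positive, the normalized maximum likelihood density for the subband model — the maximized likelihood Π_{b=0}^{B} Π_{i∈γ_b} φ(c_i; 0, σ̂_b²) divided by its integral over the region {c′ ∈ ℝⁿ : σ²_min ≤ S_{γ_b}(c′)/k_b ≤ σ²_max for all b} — has code length −ln f_nml(c) = Σ_{b=0}^{B} [ (k_b/2) ln S_{γ_b}(c) − ln Γ(k_b/2) ] + (n/2) ln π + (B+1) ln ln(σ²_max/σ²_min). -/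

import Mathlib

open MeasureTheory Real Finset

/-- `Sg γ c = ∑_{i ∈ γ} c_i²`. -/
noncomputable def Sg {n : ℕ} (γ : Finset (Fin n)) (c : Fin n → ℝ) : ℝ :=
  ∑ i ∈ γ, (c i) ^ 2

/-- Centered Gaussian density `φ(x; 0, σ²) = (2πσ²)^{-1/2} exp(-x²/(2σ²))`. -/
noncomputable def gauss (x σ2 : ℝ) : ℝ :=
  (2 * Real.pi * σ2) ^ (-(1 : ℝ) / 2) * Real.exp (-(x ^ 2) / (2 * σ2))

/-- The maximized likelihood of `c` under the subband model with subbands `γ b`. -/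
noncomputable def maxLikSub {n B : ℕ} (γ : Fin (B + 1) → Finset (Fin n))
    (c : Fin n → ℝ) : ℝ :=
  ∏ b : Fin (B + 1), ∏ i ∈ γ b, gauss (c i) (Sg (γ b) c / (γ b).card)

lemma aux_split {n B : ℕ} (γ : Fin (B + 1) → Finset (Fin n))
    (hdisj : ∀ b b' : Fin (B + 1), b ≠ b' → Disjoint (γ b) (γ b'))
    (hcover : Finset.univ.biUnion γ = (Finset.univ : Finset (Fin n)))
    (F : (b : Fin (B + 1)) → ((γ b) → ℝ) → ℝ) :
    ∫ x : Fin n → ℝ, ∏ b, F b (fun i => x i) = ∏ b, ∫ y : (γ b) → ℝ, F b y := by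
  let e : (Σ b, (γ b)) ≃ Fin n := Equiv.ofBijective (fun p => (p.2 : Fin n)) (by
    constructor
    · rintro ⟨b, i, hi⟩ ⟨b', i', hi'⟩ h
      dsimp only at h
      subst h
      have : b = b' := by
        by_contra hne
        exact (Finset.disjoint_left.mp (hdisj b b' hne)) hi hi'
      subst this
      rfl
    · intro i
      have : i ∈ Finset.univ.biUnion γ := by rw [hcover]; simp
      obtain ⟨b, -, hb⟩ := Finset.mem_biUnion.mp this
      exact ⟨⟨b, i, hb⟩, rfl⟩)
  have h1 : MeasurePreserving (MeasurableEquiv.piCurry (fun (b : Fin (B + 1)) (_ : γ b) => ℝ)).symm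
      volume volume := by
    refine ⟨MeasurableEquiv.measurable _, ?_⟩
    refine (Measure.pi_eq fun s _ => ?_).symm
    rw [MeasurableEquiv.map_apply]
    have : (MeasurableEquiv.piCurry (fun (b : Fin (B + 1)) (_ : γ b) => ℝ)).symm ⁻¹'
        (Set.univ.pi s) = Set.univ.pi (fun b => Set.univ.pi (fun i => s ⟨b, i⟩)) := by
      ext x
      simp only [Set.mem_preimage, Set.mem_pi, Set.mem_univ, true_imp_iff,
        MeasurableEquiv.coe_piCurry_symm]
      exact ⟨fun h b i => h ⟨b, i⟩, fun h p => h p.1 p.2⟩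
    rw [this, volume_pi, Measure.pi_pi]
    simp_rw [volume_pi, Measure.pi_pi]
    rw [Fintype.prod_sigma]
  have h2 := volume_measurePreserving_piCongrLeft (fun _ : Fin n => ℝ) e
  have h3 := h2.comp h1
  rw [← integral_fintype_prod_volume_eq_prod, ← h2.integral_comp', ← h1.integral_comp']
  refine integral_congr_ae (Filter.Eventually.of_forall fun x => ?_)
  refine Finset.prod_congr rfl fun b _ => ?_
  congr 1
  funext i
  have : (i : Fin n) = e ⟨b, i⟩ := rfl
  rw [this, MeasurableEquiv.coe_piCongrLeft, Equiv.piCongrLeft_apply_apply]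
  rfl

lemma aux_radial {ι : Type} [Fintype ι] [Nonempty ι] (f : ℝ → ℝ) :
    ∫ y : ι → ℝ, f (∑ i, y i ^ 2) =
      (Fintype.card ι : ℝ) * (√π ^ (Fintype.card ι) / Real.Gamma ((Fintype.card ι : ℝ) / 2 + 1)) *
       ∫ r in Set.Ioi (0 : ℝ), r ^ (Fintype.card ι - 1) * f (r ^ 2) := by
  have h := integral_fun_norm_addHaar (volume : Measure (EuclideanSpace ℝ ι)) (fun r => f (r ^ 2))
  rw [← (PiLp.volume_preserving_toLp ι).integral_comp
    (MeasurableEquiv.toLp 2 (ι → ℝ)).measurableEmbedding] at h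
  simp only [EuclideanSpace.norm_sq_eq, Real.norm_eq_abs, sq_abs, finrank_euclideanSpace] at h
  rw [h, Measure.real, EuclideanSpace.volume_ball]
  have hp : 0 ≤ √π ^ (Fintype.card ι) / Real.Gamma ((Fintype.card ι : ℝ) / 2 + 1) := by
    have := Real.Gamma_pos_of_pos (s := (Fintype.card ι : ℝ) / 2 + 1) (by positivity)
    positivity
  simp [ENNReal.toReal_ofReal hp, mul_assoc]

noncomputable def GG (k : ℕ) (s : ℝ) : ℝ :=
  (2 * π * (s / k)) ^ (-(k : ℝ) / 2) * Real.exp (-(k : ℝ) / 2)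

lemma GG_eq (k : ℕ) (s : ℝ) (hs : 0 < s) :
    GG k s = GG k 1 * s ^ (-(k : ℝ) / 2) := by
  unfold GG
  rw [show 2 * π * (s / k) = 2 * π * (1 / k) * s by ring,
    Real.mul_rpow (by positivity) hs.le]
  ring

lemma GG_pos (k : ℕ) (hk : 1 ≤ k) (s : ℝ) (hs : 0 < s) : 0 < GG k s := by
  unfold GG
  have : (0 : ℝ) < k := by exact_mod_cast hk
  positivity

lemma aux_gauss {n : ℕ} (γ : Finset (Fin n)) (k : ℕ) (hk : γ.card = k) (hk1 : 1 ≤ k)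
    (c : Fin n → ℝ) (hs : 0 < Sg γ c) :
    ∏ i ∈ γ, gauss (c i) (Sg γ c / γ.card) = GG k (Sg γ c) := by
  have hk0 : (0 : ℝ) < k := by exact_mod_cast hk1
  simp only [gauss]
  rw [Finset.prod_mul_distrib, Finset.prod_const, ← Real.exp_sum, hk, ← Finset.sum_div,
    Finset.sum_neg_distrib]
  change _ * Real.exp (-(Sg γ c) / _) = _
  unfold GG
  congr 1
  · rw [← Real.rpow_natCast, ← Real.rpow_mul (by positivity)]
    congr 1
    ring
  · congr 1
    field_simp

lemma aux_int (k : ℕ) (hk1 : 1 ≤ k) (a b : ℝ) (ha : 0 < a) (hab : a < b) :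
    ∫ r in Set.Ioi (0 : ℝ), r ^ (k - 1) *
      (if a ≤ r ^ 2 / k ∧ r ^ 2 / k ≤ b then GG k (r ^ 2) else 0) =
    GG k 1 * (Real.log (b / a) / 2) := by
  have hk0 : (0 : ℝ) < k := by exact_mod_cast hk1
  have hb : 0 < b := ha.trans hab
  have hle : √(k * a) ≤ √(k * b) := Real.sqrt_le_sqrt (by gcongr)
  have h1 : ∫ r in Set.Ioi (0 : ℝ), r ^ (k - 1) *
      (if a ≤ r ^ 2 / k ∧ r ^ 2 / k ≤ b then GG k (r ^ 2) else 0) =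
      ∫ r in Set.Ioi (0 : ℝ), (Set.Icc (√(k * a)) (√(k * b))).indicator
        (fun r => GG k 1 * r⁻¹) r := by
    refine setIntegral_congr_fun measurableSet_Ioi fun r hr => ?_
    have hr : 0 < r := hr
    have hiff : (a ≤ r ^ 2 / k ∧ r ^ 2 / k ≤ b) ↔ r ∈ Set.Icc (√(k * a)) (√(k * b)) := by
      rw [Set.mem_Icc, Real.sqrt_le_left hr.le, Real.le_sqrt hr.le, le_div_iff₀ hk0,
        div_le_iff₀ hk0, mul_comm a, mul_comm b]
      positivity
    rw [Set.indicator_apply]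
    simp only [hiff]
    split_ifs with h
    · rw [GG_eq _ _ (by positivity), ← Real.rpow_natCast r 2, ← Real.rpow_mul hr.le]
      have : ((2 : ℕ) : ℝ) * (-(k : ℝ) / 2) = -(k : ℝ) := by push_cast; ring
      rw [this, Real.rpow_neg hr.le, Real.rpow_natCast]
      obtain ⟨m, rfl⟩ : ∃ m, k = m + 1 := ⟨k - 1, by omega⟩
      simp only [Nat.add_sub_cancel, pow_succ]
      field_simp
    · simp
  rw [h1, setIntegral_indicator measurableSet_Icc]
  have hpa : 0 < √(k * a) := by positivity
  have hsub : Set.Icc (√(k * a)) (√(k * b)) ⊆ Set.Ioi (0 : ℝ) :=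
    fun r hr => lt_of_lt_of_le hpa hr.1
  rw [Set.inter_eq_self_of_subset_right hsub,
    integral_Icc_eq_integral_Ioc, ← intervalIntegral.integral_of_le hle,
    intervalIntegral.integral_const_mul, integral_inv_of_pos hpa (by positivity),
    ← Real.sqrt_div (by positivity), Real.log_sqrt (by positivity), mul_div_mul_left _ _ hk0.ne']

theorem stmt_12 (n B : ℕ) (hn : 1 ≤ n) (γ : Fin (B + 1) → Finset (Fin n))
    (hdisj : ∀ b b' : Fin (B + 1), b ≠ b' → Disjoint (γ b) (γ b'))
    (hcover : Finset.univ.biUnion γ = (Finset.univ : Finset (Fin n)))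
    (k : Fin (B + 1) → ℕ) (hk : ∀ b, (γ b).card = k b) (hk1 : ∀ b, 1 ≤ k b)
    (σmin σmax : ℝ) (h0 : 0 < σmin) (hσ : σmin < σmax)
    (c : Fin n → ℝ)
    (hml : ∀ b : Fin (B + 1),
      Sg (γ b) c / (k b : ℝ) ∈ Set.Icc σmin σmax ∧ 0 < Sg (γ b) c / (k b : ℝ)) :
    -Real.log
      (maxLikSub γ c /
        ∫ c' in {c' : Fin n → ℝ | ∀ b : Fin (B + 1),
            σmin ≤ Sg (γ b) c' / (k b : ℝ) ∧ Sg (γ b) c' / (k b : ℝ) ≤ σmax},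
          maxLikSub γ c')
    = (∑ b : Fin (B + 1),
        ((k b : ℝ) / 2 * Real.log (Sg (γ b) c) - Real.log (Real.Gamma ((k b : ℝ) / 2))))
      + (n : ℝ) / 2 * Real.log Real.pi
      + ((B : ℝ) + 1) * Real.log (Real.log (σmax / σmin)) := by
  have hk0 : ∀ b, (0 : ℝ) < k b := fun b => by exact_mod_cast hk1 b
  have hpos : ∀ (x : Fin n → ℝ) b, 0 < Sg (γ b) x / (k b : ℝ) → 0 < Sg (γ b) x := fun x b h => by
    have := mul_pos h (hk0 b)
    rwa [div_mul_cancel₀ _ (hk0 b).ne'] at this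
  have hlik : ∀ x : Fin n → ℝ, (∀ b, 0 < Sg (γ b) x) →
      maxLikSub γ x = ∏ b, GG (k b) (Sg (γ b) x) := fun x hx =>
    Finset.prod_congr rfl fun b _ => aux_gauss _ _ (hk b) (hk1 b) x (hx b)
  have hL : 0 < Real.log (σmax / σmin) := Real.log_pos ((one_lt_div h0).mpr hσ)
  have hΓ : ∀ b, 0 < Real.Gamma ((k b : ℝ) / 2) := fun b =>
    Real.Gamma_pos_of_pos (by have := hk0 b; positivity)
  have hmeas : MeasurableSet {c' : Fin n → ℝ | ∀ b : Fin (B + 1),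
            σmin ≤ Sg (γ b) c' / (k b : ℝ) ∧ Sg (γ b) c' / (k b : ℝ) ≤ σmax} := by
    have hS : ∀ b, Measurable (fun x : Fin n → ℝ => Sg (γ b) x / (k b : ℝ)) := by
      intro b; unfold Sg; fun_prop
    rw [Set.ofPred_forall]
    exact MeasurableSet.iInter fun b =>
      (measurableSet_le measurable_const (hS b)).inter (measurableSet_le (hS b) measurable_const)
  have hint : ∫ c' in {c' : Fin n → ℝ | ∀ b : Fin (B + 1),
            σmin ≤ Sg (γ b) c' / (k b : ℝ) ∧ Sg (γ b) c' / (k b : ℝ) ≤ σmax},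
          maxLikSub γ c' = ∏ b, (√π ^ (k b) / Real.Gamma ((k b : ℝ) / 2) *
            (GG (k b) 1 * Real.log (σmax / σmin))) := by
    rw [← integral_indicator hmeas]
    let f : Fin (B + 1) → ℝ → ℝ := fun b s =>
      if σmin ≤ s / (k b) ∧ s / (k b) ≤ σmax then GG (k b) s else 0
    have h1 : ∀ x : Fin n → ℝ, Set.indicator {c' : Fin n → ℝ | ∀ b : Fin (B + 1),
            σmin ≤ Sg (γ b) c' / (k b : ℝ) ∧ Sg (γ b) c' / (k b : ℝ) ≤ σmax}
          (fun c' => maxLikSub γ c') x = ∏ b, f b (∑ i : γ b, x i ^ 2) := by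
      intro x
      have hs : ∀ b, ∑ i : γ b, x i ^ 2 = Sg (γ b) x := fun b =>
        Finset.sum_coe_sort (γ b) (fun i => x i ^ 2)
      simp only [hs]
      rw [Set.indicator_apply]
      split_ifs with h
      · rw [hlik x fun b => hpos x b (h0.trans_le (h b).1)]
        exact Finset.prod_congr rfl fun b _ => (if_pos (h b)).symm
      · simp only [Set.mem_setOf_eq, not_forall] at h
        obtain ⟨b, hb⟩ := h
        exact (Finset.prod_eq_zero (Finset.mem_univ b) (if_neg hb)).symm
    simp_rw [h1]
    rw [aux_split γ hdisj hcover (fun b y => f b (∑ i, y i ^ 2))]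
    refine Finset.prod_congr rfl fun b _ => ?_
    have hcard : Fintype.card (γ b) = k b := by rw [Fintype.card_coe, hk]
    haveI : Nonempty (γ b) := Fintype.card_pos_iff.mp (by rw [hcard]; exact hk1 b)
    rw [aux_radial (f b), hcard, aux_int (k b) (hk1 b) σmin σmax h0 hσ,
      Real.Gamma_add_one (by have := hk0 b; positivity)]
    have := hΓ b
    have := hk0 b
    field_simp
  have hc : ∀ b, 0 < Sg (γ b) c := fun b => hpos c b (hml b).2
  have hn' : (n : ℝ) = ∑ b, (k b : ℝ) := by
    have : n = ∑ b, k b := by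
      have h := congrArg Finset.card hcover
      rw [Finset.card_biUnion (fun b _ b' _ h => hdisj b b' h)] at h
      simp [hk] at h
      exact h.symm
    exact_mod_cast this
  have hB : ((B : ℝ) + 1) * Real.log (Real.log (σmax / σmin)) =
      ∑ _b : Fin (B + 1), Real.log (Real.log (σmax / σmin)) := by simp
  rw [hint, hlik c hc, ← Finset.prod_div_distrib, Real.log_prod, hB, hn', Finset.sum_div,
    Finset.sum_mul, ← Finset.sum_add_distrib, ← Finset.sum_add_distrib, ← Finset.sum_neg_distrib]
  · refine Finset.sum_congr rfl fun b _ => ?_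
    have hg := GG_pos (k b) (hk1 b) 1 one_pos
    have hr := Real.rpow_pos_of_pos (hc b) (-(k b : ℝ) / 2)
    have hq : 0 < √π ^ (k b) := by positivity
    have := hΓ b
    rw [GG_eq _ _ (hc b), Real.log_div (by positivity) (by positivity),
      Real.log_mul hg.ne' hr.ne', Real.log_mul (by positivity) (by positivity),
      Real.log_mul hg.ne' hL.ne', Real.log_div hq.ne' this.ne', Real.log_pow,
      Real.log_sqrt Real.pi_pos.le, Real.log_rpow (hc b)]
    ring
  · intro b _
    have hg := GG_pos (k b) (hk1 b) 1 one_pos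
    have hg' := GG_pos (k b) (hk1 b) _ (hc b)
    have := hΓ b
    positivity
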